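/- arXiv:2601.11010 — 2 statements merged into one kernel-verified Lean document; each statement's English description precedes it below -/
import Mathlib

section
/- Necessity of the feasibility pre-screening conditions: suppose the travel times satisfy the triangle inequality and the service durations are nonnegative, and suppose a feasible route n_0 = s, n_1, …, n_G = d with service start times a_0 = t_0, …, a_G serves a node i, i.e., i = n_g for some 1 ≤ g ≤ G − 1. Then, writing ā = max{t_0 + t(s, i), r(i), b(i)}, both pre-screening conditions hold: ā ≤ e(i) and ā + τ(i) + t(i, d) ≤ Tend. In particular, a worker that cannot satisfy these two inequalities for task i cannot serve i on any feasible route. -/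
/-- Necessity of the feasibility pre-screening conditions: if a feasible route
of a worker serves node `i`, then with `ā = max {t0 + t (s,i), r i, b i}` both
pre-screening conditions `ā ≤ e i` and `ā + τ i + t (i,d) ≤ Tend` hold. -/
theorem prescreening_necessary {V : Type*}
    (τ : V → ℝ) (t : V × V → ℝ) (r b e : V → ℝ)
    (s d : V) (t0 Tend : ℝ)
    (hτ : ∀ i, 0 ≤ τ i) (ht : ∀ p, 0 ≤ t p)
    (htri : ∀ x y z : V, t (x, z) ≤ t (x, y) + t (y, z))
    (G : ℕ) (hG : 1 ≤ G) (n : ℕ → V) (a : ℕ → ℝ)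
    (hn0 : n 0 = s) (hnG : n G = d) (ha0 : a 0 = t0)
    (hrec : ∀ g, 1 ≤ g → g ≤ G →
      a (g - 1) + τ (n (g - 1)) + t (n (g - 1), n g) ≤ a g)
    (hfeas : ∀ g, 1 ≤ g → g ≤ G - 1 →
      max (b (n g)) (r (n g)) ≤ a g ∧ a g ≤ e (n g))
    (hdl : a G ≤ Tend)
    (i : V) (g : ℕ) (hg1 : 1 ≤ g) (hg2 : g ≤ G - 1) (hserve : n g = i) :
    max (max (t0 + t (s, i)) (r i)) (b i) ≤ e i ∧
    max (max (t0 + t (s, i)) (r i)) (b i) + τ i + t (i, d) ≤ Tend := by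
  have key : ∀ h k, h + 1 ≤ k → k ≤ G → a h + τ (n h) + t (n h, n k) ≤ a k := by
    intro h k hk
    induction k, hk using Nat.le_induction with
    | base =>
      intro hkG
      have := hrec (h + 1) (by omega) hkG
      simpa using this
    | succ k hk ih =>
      intro hkG
      have h1 := ih (by omega)
      have h2 := hrec (k + 1) (by omega) hkG
      simp only [Nat.add_sub_cancel] at h2
      have h3 := htri (n h) (n k) (n (k + 1))
      have h4 := hτ (n k)
      linarith
  have k1 := key 0 g (by omega) (by omega)
  have k2 := key g G (by omega) le_rfl
  obtain ⟨f1, f2⟩ := hfeas g hg1 hg2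
  rw [hn0, ha0, hserve] at k1
  rw [hnG, hserve] at k2
  rw [hserve] at f1 f2
  have h5 := hτ s
  have hm : max (max (t0 + t (s, i)) (r i)) (b i) ≤ a g :=
    max_le (max_le (by linarith) ((le_max_right _ _).trans f1)) ((le_max_left _ _).trans f1)
  exact ⟨hm.trans f2, by linarith⟩
end

section
/- Safety of the pre-screening filter: let i be a task and let each idle worker w have current location s_w, destination d_w, departure time t_0 and deadline Tend(w), and suppose the travel times satisfy the triangle inequality and the service durations are nonnegative. If for every idle worker w at least one of the two conditions max{t_0 + t(s_w, i), r(i), b(i)} ≤ e(i) and max{t_0 + t(s_w, i), r(i), b(i)} + τ(i) + t(i, d_w) ≤ Tend(w) fails (i.e., the feasible-worker set F_i is empty), then task i is not served on any feasible route of any idle worker; hence omitting i from the snapshot does not remove any feasible service of i. -/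
/-- Safety of the pre-screening filter: if for every idle worker at least one
of the two pre-screening conditions for task `i` fails (the feasible-worker
set `F_i` is empty), then no feasible route of any idle worker serves `i`. -/
theorem prescreen_filter_safe {V Wk : Type*}
    (τ : V → ℝ) (t : V × V → ℝ) (r b e : V → ℝ)
    (sw dw : Wk → V) (t0 : ℝ) (Tend : Wk → ℝ)
    (hτ : ∀ i, 0 ≤ τ i) (ht : ∀ p, 0 ≤ t p)
    (htri : ∀ x y z : V, t (x, z) ≤ t (x, y) + t (y, z))
    (i : V)
    (hfail : ∀ w : Wk,
      ¬ (max (max (t0 + t (sw w, i)) (r i)) (b i) ≤ e i ∧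
         max (max (t0 + t (sw w, i)) (r i)) (b i) + τ i + t (i, dw w) ≤ Tend w)) :
    ∀ w : Wk, ¬ ∃ (G : ℕ) (n : ℕ → V) (a : ℕ → ℝ),
      1 ≤ G ∧ n 0 = sw w ∧ n G = dw w ∧ a 0 = t0 ∧
      (∀ g, 1 ≤ g → g ≤ G →
        a (g - 1) + τ (n (g - 1)) + t (n (g - 1), n g) ≤ a g) ∧
      (∀ g, 1 ≤ g → g ≤ G - 1 →
        max (b (n g)) (r (n g)) ≤ a g ∧ a g ≤ e (n g)) ∧
      a G ≤ Tend w ∧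
      (∃ g, 1 ≤ g ∧ g ≤ G - 1 ∧ n g = i) := by
  rintro w ⟨G, n, a, hG, h0, hd, ha0, hstep, hwin, hend, g, hg1, hg2, rfl⟩
  have key : ∀ j m : ℕ, j + 1 + m ≤ G →
      a j + τ (n j) + t (n j, n (j + 1 + m)) ≤ a (j + 1 + m) := by
    intro j m
    induction m with
    | zero =>
      intro h
      have := hstep (j + 1) (by omega) (by omega)
      simpa using this
    | succ m ih =>
      intro h
      have h1 := ih (by omega)
      have h2 := hstep (j + 1 + m + 1) (by omega) (by omega)
      simp only [Nat.add_sub_cancel] at h2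
      have h3 := htri (n j) (n (j + 1 + m)) (n (j + 1 + m + 1))
      have h4 := hτ (n (j + 1 + m))
      have h5 : j + 1 + (m + 1) = j + 1 + m + 1 := by omega
      rw [h5]
      linarith
  have k1 := key 0 (g - 1) (by omega)
  rw [show 0 + 1 + (g - 1) = g by omega, h0, ha0] at k1
  have k2 := key g (G - g - 1) (by omega)
  rw [show g + 1 + (G - g - 1) = G by omega, hd] at k2
  obtain ⟨w1, w2⟩ := hwin g hg1 hg2
  have hm : max (max (t0 + t (sw w, n g)) (r (n g))) (b (n g)) ≤ a g := by
    have := hτ (sw w)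
    refine max_le (max_le (by linarith) ((le_max_right _ _).trans w1))
      ((le_max_left _ _).trans w1)
  exact hfail w ⟨hm.trans w2, by linarith⟩
end
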